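/- For every Weyl candidate W on Minkowski space V, the left dual equals the right dual: (*W)_{μνλρ} = (W*)_{μνλρ} for all indices. -/

import Mathlib

noncomputable section

/-- Minkowski space `V = ℝ⁴`. -/
abbrev V4 : Type := Fin 4 → ℝ

/-- The Minkowski bilinear form of signature `(-,+,+,+)`. -/
def η (x y : V4) : ℝ := -(x 0 * y 0) + x 1 * y 1 + x 2 * y 2 + x 3 * y 3

/-- The standard basis of `V4`. -/
def e4 (a : Fin 4) : V4 := Pi.single a 1

/-- Components of the Minkowski metric `diag(-1,1,1,1)` (its own inverse). -/
def ηm (a b : Fin 4) : ℝ := if a = b then (if a = (0 : Fin 4) then -1 else 1) else 0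

/-- A 4-linear form on `V4`, given by its components in the standard basis. -/
abbrev T4 : Type := Fin 4 → Fin 4 → Fin 4 → Fin 4 → ℝ

/-- A bilinear form on `V4`, given by its components in the standard basis. -/
abbrev T2 : Type := Fin 4 → Fin 4 → ℝ

/-- Evaluation of a 4-linear form (given by components) on vectors. -/
def eval4 (W : T4) (x y z w : V4) : ℝ :=
  ∑ a : Fin 4, ∑ b : Fin 4, ∑ c : Fin 4, ∑ d : Fin 4, W a b c d * x a * y b * z c * w d

/-- The alternating volume 4-form with `vol(e₀,e₁,e₂,e₃) = 1`. -/
def volv (x y z w : V4) : ℝ := Matrix.det (Matrix.of ![x, y, z, w])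

/-- Components `η_{αβγδ}` of the volume form. -/
def volc (a b c d : Fin 4) : ℝ := volv (e4 a) (e4 b) (e4 c) (e4 d)

/-- Left dual `(*W)_{μνλρ} = ½ η_{μν}{}^{αβ} W_{αβλρ}`. -/
def leftDual (W : T4) : T4 := fun μ ν lam ρ =>
  (1/2) * ∑ γ : Fin 4, ∑ δ : Fin 4, ∑ a : Fin 4, ∑ b : Fin 4,
    volc μ ν γ δ * ηm γ a * ηm δ b * W a b lam ρ

/-- Right dual `(W*)_{μνλρ} = ½ W_{μν}{}^{αβ} η_{αβλρ}`. -/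
def rightDual (W : T4) : T4 := fun μ ν lam ρ =>
  (1/2) * ∑ γ : Fin 4, ∑ δ : Fin 4, ∑ a : Fin 4, ∑ b : Fin 4,
    W μ ν a b * ηm a γ * ηm b δ * volc γ δ lam ρ

/-- A Weyl candidate: pair antisymmetries, pair exchange, first Bianchi, trace-free. -/
def IsWeyl (W : T4) : Prop :=
  (∀ x y z w : V4, eval4 W x y z w = - eval4 W y x z w) ∧
  (∀ x y z w : V4, eval4 W x y z w = - eval4 W x y w z) ∧
  (∀ x y z w : V4, eval4 W x y z w = eval4 W z w x y) ∧
  (∀ x y z w : V4, eval4 W x y z w + eval4 W x z w y + eval4 W x w y z = 0) ∧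
  (∀ x y : V4, ∑ a : Fin 4, ∑ b : Fin 4, ηm a b * eval4 W (e4 a) x (e4 b) y = 0)

/-- Electric part `E(W)_{ab} = W(e_a, n, e_b, n)`. -/
def Epart (W : T4) (n : V4) : T2 := fun a b => eval4 W (e4 a) n (e4 b) n

/-- Magnetic part `B(W)_{ab} = (W*)(e_a, n, e_b, n)`. -/
def Bpart (W : T4) (n : V4) : T2 := fun a b => eval4 (rightDual W) (e4 a) n (e4 b) n

/-- Raise both indices of a bilinear form's components. -/
def up2 (S : T2) : T2 := fun a b => ∑ c : Fin 4, ∑ d : Fin 4, ηm a c * ηm b d * S c d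

/-- Full contraction `S_{ab} T^{ab}`. -/
def contr2 (S T : T2) : ℝ := ∑ a : Fin 4, ∑ b : Fin 4, S a b * up2 T a b

/-- On basis vectors, a 4-linear form takes its components as values. -/
lemma eval4_basis (W : T4) (a b c d : Fin 4) :
    eval4 W (e4 a) (e4 b) (e4 c) (e4 d) = W a b c d := by
  simp [eval4, e4, Pi.single_apply]

/-- The Levi-Civita symbol as an integer determinant. -/
def leviCivita (a b c d : Fin 4) : ℤ :=
  Matrix.det (Matrix.of ![Pi.single a 1, Pi.single b 1, Pi.single c 1, Pi.single d 1])

lemma volc_eq_leviCivita (a b c d : Fin 4) : volc a b c d = (leviCivita a b c d : ℝ) := by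
  simp only [volc, volv, leviCivita, Int.cast_det]
  congr 1
  ext i j
  fin_cases i <;> simp [e4, Pi.single_apply]

set_option maxRecDepth 100000 in
/-- The Levi-Civita symbol as a Vandermonde product of index differences. -/
lemma twelve_mul_leviCivita (a b c d : Fin 4) :
    12 * leviCivita a b c d = ((b : ℕ) - (a : ℕ) : ℤ) * ((c : ℕ) - (a : ℕ)) * ((d : ℕ) - (a : ℕ)) *
      ((c : ℕ) - (b : ℕ)) * ((d : ℕ) - (b : ℕ)) * ((d : ℕ) - (c : ℕ)) := by
  revert a b c d
  simp only [leviCivita, Matrix.det_succ_row_zero, Fin.sum_univ_succ]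
  decide

lemma volc_eq_prod (a b c d : Fin 4) :
    volc a b c d = ((b : ℕ) - (a : ℕ) : ℝ) * ((c : ℕ) - (a : ℕ)) * ((d : ℕ) - (a : ℕ)) *
      ((c : ℕ) - (b : ℕ)) * ((d : ℕ) - (b : ℕ)) * ((d : ℕ) - (c : ℕ)) / 12 := by
  rw [volc_eq_leviCivita, eq_div_iff (by norm_num), mul_comm]
  exact_mod_cast twelve_mul_leviCivita a b c d

/-- The diagonal entries of the Minkowski metric. -/
def ηdiag (a : Fin 4) : ℝ := if a = 0 then -1 else 1

lemma leftDual_eq_sum (W : T4) (μ ν lam ρ : Fin 4) :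
    leftDual W μ ν lam ρ =
      (1/2) * ∑ a, ∑ b, volc μ ν a b * (ηdiag a * ηdiag b) * W a b lam ρ := by
  simp [leftDual, ηm, ηdiag]

lemma rightDual_eq_sum (W : T4) (μ ν lam ρ : Fin 4) :
    rightDual W μ ν lam ρ =
      (1/2) * ∑ a, ∑ b, volc a b lam ρ * (ηdiag a * ηdiag b) * W μ ν a b := by
  simp [rightDual, ηm, ηdiag, mul_comm]

namespace IsWeyl

variable {W : T4}

lemma swap_left (hW : IsWeyl W) (a b c d : Fin 4) : W a b c d = -W b a c d := by
  simpa only [eval4_basis] using hW.1 (e4 a) (e4 b) (e4 c) (e4 d)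

lemma swap_right (hW : IsWeyl W) (a b c d : Fin 4) : W a b c d = -W a b d c := by
  simpa only [eval4_basis] using hW.2.1 (e4 a) (e4 b) (e4 c) (e4 d)

lemma pair_swap (hW : IsWeyl W) (a b c d : Fin 4) : W a b c d = W c d a b := by
  simpa only [eval4_basis] using hW.2.2.1 (e4 a) (e4 b) (e4 c) (e4 d)

lemma trace (hW : IsWeyl W) (b d : Fin 4) :
    -W 0 b 0 d + W 1 b 1 d + W 2 b 2 d + W 3 b 3 d = 0 := by
  simpa [eval4_basis, ηm, Fin.sum_univ_four] using hW.2.2.2.2 (e4 b) (e4 d)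

lemma self_left (hW : IsWeyl W) (a c d : Fin 4) : W a a c d = 0 :=
  self_eq_neg.mp (hW.swap_left a a c d)

lemma self_right (hW : IsWeyl W) (a b c : Fin 4) : W a b c c = 0 :=
  self_eq_neg.mp (hW.swap_right a b c c)

end IsWeyl

lemma leftDual_swap_left (W : T4) (μ ν lam ρ : Fin 4) :
    leftDual W μ ν lam ρ = -leftDual W ν μ lam ρ := by
  simp only [leftDual_eq_sum, volc_eq_prod, ← mul_neg, ← Finset.sum_neg_distrib]
  congr! 3
  ring

lemma leftDual_swap_right {W : T4} (hW : IsWeyl W) (μ ν lam ρ : Fin 4) :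
    leftDual W μ ν lam ρ = -leftDual W μ ν ρ lam := by
  simp only [leftDual_eq_sum, hW.swap_right _ _ lam ρ, mul_neg, Finset.sum_neg_distrib]

lemma rightDual_swap_left {W : T4} (hW : IsWeyl W) (μ ν lam ρ : Fin 4) :
    rightDual W μ ν lam ρ = -rightDual W ν μ lam ρ := by
  simp only [rightDual_eq_sum, hW.swap_left μ ν, mul_neg, Finset.sum_neg_distrib]

lemma rightDual_swap_right (W : T4) (μ ν lam ρ : Fin 4) :
    rightDual W μ ν lam ρ = -rightDual W μ ν ρ lam := by
  simp only [rightDual_eq_sum, volc_eq_prod, ← mul_neg, ← Finset.sum_neg_distrib]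
  congr! 3
  ring

/-- The left dual permutes the antisymmetric index pairs up to sign. -/
lemma leftDual_components {W : T4} (hW : IsWeyl W) (lam ρ : Fin 4) :
    leftDual W 0 1 lam ρ = W 2 3 lam ρ ∧ leftDual W 0 2 lam ρ = -W 1 3 lam ρ ∧
    leftDual W 0 3 lam ρ = W 1 2 lam ρ ∧ leftDual W 1 2 lam ρ = -W 0 3 lam ρ ∧
    leftDual W 1 3 lam ρ = W 0 2 lam ρ ∧ leftDual W 2 3 lam ρ = -W 0 1 lam ρ := by
  simp only [leftDual_eq_sum, volc_eq_prod, Fin.sum_univ_four, ηdiag, hW.swap_left 1 0,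
    hW.swap_left 2 0, hW.swap_left 3 0, hW.swap_left 2 1, hW.swap_left 3 1, hW.swap_left 3 2]
  norm_num [Fin.ext_iff]
  ring_nf
  simp

/-- The right dual permutes the antisymmetric index pairs up to sign. -/
lemma rightDual_components {W : T4} (hW : IsWeyl W) (μ ν : Fin 4) :
    rightDual W μ ν 0 1 = W μ ν 2 3 ∧ rightDual W μ ν 0 2 = -W μ ν 1 3 ∧
    rightDual W μ ν 0 3 = W μ ν 1 2 ∧ rightDual W μ ν 1 2 = -W μ ν 0 3 ∧
    rightDual W μ ν 1 3 = W μ ν 0 2 ∧ rightDual W μ ν 2 3 = -W μ ν 0 1 := by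
  simp only [rightDual_eq_sum, volc_eq_prod, Fin.sum_univ_four, ηdiag, hW.swap_right _ _ 1 0,
    hW.swap_right _ _ 2 0, hW.swap_right _ _ 3 0, hW.swap_right _ _ 2 1, hW.swap_right _ _ 3 1,
    hW.swap_right _ _ 3 2]
  norm_num [Fin.ext_iff]
  ring_nf
  simp

set_option maxHeartbeats 1000000 in
/-- The two duals agree on components with increasing index pairs. -/
lemma leftDual_eq_rightDual_of_lt {W : T4} (hW : IsWeyl W) {μ ν lam ρ : Fin 4}
    (h : μ < ν) (h' : lam < ρ) : leftDual W μ ν lam ρ = rightDual W μ ν lam ρ := by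
  have trace00 := hW.trace 0 0
  have trace11 := hW.trace 1 1
  have trace22 := hW.trace 2 2
  have trace33 := hW.trace 3 3
  have trace01 := hW.trace 0 1
  have trace02 := hW.trace 0 2
  have trace03 := hW.trace 0 3
  have trace12 := hW.trace 1 2
  have trace13 := hW.trace 1 3
  have trace23 := hW.trace 2 3
  have pair02_03 := hW.pair_swap 0 3 0 2
  have pair02_12 := hW.pair_swap 1 2 0 2
  have pair02_13 := hW.pair_swap 1 3 0 2
  have pair02_23 := hW.pair_swap 2 3 0 2
  have pair03_12 := hW.pair_swap 1 2 0 3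
  have pair03_13 := hW.pair_swap 1 3 0 3
  have pair03_23 := hW.pair_swap 2 3 0 3
  have pair12_13 := hW.pair_swap 1 3 1 2
  have pair12_23 := hW.pair_swap 2 3 1 2
  have pair13_23 := hW.pair_swap 2 3 1 3
  have pair01_02 := hW.pair_swap 0 2 0 1
  have pair01_03 := hW.pair_swap 0 3 0 1
  have pair01_12 := hW.pair_swap 1 2 0 1
  have pair01_13 := hW.pair_swap 1 3 0 1
  have pair01_23 := hW.pair_swap 2 3 0 1
  simp only [hW.self_left, hW.self_right, hW.swap_left 1 0, hW.swap_left 2 0, hW.swap_left 3 0,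
    hW.swap_left 2 1, hW.swap_left 3 1, hW.swap_left 3 2, hW.swap_right _ _ 1 0,
    hW.swap_right _ _ 2 0, hW.swap_right _ _ 3 0, hW.swap_right _ _ 2 1, hW.swap_right _ _ 3 1,
    hW.swap_right _ _ 3 2, neg_neg]
    at trace00 trace11 trace22 trace33 trace01 trace02 trace03 trace12 trace13 trace23
  fin_cases μ <;> fin_cases ν <;> first | exact absurd h (by decide) | skip
  all_goals
    fin_cases lam <;> fin_cases ρ <;> first | exact absurd h' (by decide) | skip
  all_goals
    simp only [Fin.zero_eta, Fin.mk_one, Fin.reduceFinMk, leftDual_components hW,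
      rightDual_components hW]
    linarith

/-- for every Weyl candidate the left dual equals the right dual. -/
theorem stmt_7 (W : T4) (hW : IsWeyl W) :
    ∀ μ ν lam ρ, leftDual W μ ν lam ρ = rightDual W μ ν lam ρ := by
  intro μ ν lam ρ
  have increasing_right : ∀ {lam ρ : Fin 4}, lam < ρ →
      leftDual W μ ν lam ρ = rightDual W μ ν lam ρ := by
    intro lam ρ h
    rcases lt_trichotomy μ ν with hμν | rfl | hμν
    · exact leftDual_eq_rightDual_of_lt hW hμν h
    · rw [self_eq_neg.mp (leftDual_swap_left W μ μ lam ρ),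
        self_eq_neg.mp (rightDual_swap_left hW μ μ lam ρ)]
    · rw [leftDual_swap_left, rightDual_swap_left hW, leftDual_eq_rightDual_of_lt hW hμν h]
  rcases lt_trichotomy lam ρ with h | rfl | h
  · exact increasing_right h
  · rw [self_eq_neg.mp (leftDual_swap_right hW μ ν lam lam),
      self_eq_neg.mp (rightDual_swap_right W μ ν lam lam)]
  · rw [leftDual_swap_right hW, rightDual_swap_right, increasing_right h]
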